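/- Assume k² := ∫₀^∞ 1/w(x) dx < ∞. Then H_w is stable under pointwise multiplication and ‖fg‖_w ≤ √(5+4k²) ‖f‖_w ‖g‖_w for all f,g ∈ H_w. Consequently, (H_w, √(5+4k²)·‖·‖_w) is a Banach algebra under pointwise multiplication. -/

import Mathlib

open MeasureTheory Set Filter

noncomputable section

/-- Inner product on the Filipović space `H_w`, for functions `g, h` with chosen
(weak) derivatives `g', h'`:  `⟨g,h⟩_w = g(0)h(0) + ∫₀^∞ w g' h'`. -/
def wInner (w g g' h h' : ℝ → ℝ) : ℝ :=
  g 0 * h 0 + ∫ x in Ioi (0:ℝ), w x * g' x * h' x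

/-- Norm on the Filipović space `H_w`. -/
def wNorm (w g g' : ℝ → ℝ) : ℝ := Real.sqrt (wInner w g g' g g')

/-- `w : ℝ≥0 → [1,∞)` continuous, increasing, with `w 0 = 1`. -/
structure IsWeight (w : ℝ → ℝ) : Prop where
  cont : ContinuousOn w (Ici 0)
  mono : MonotoneOn w (Ici 0)
  one_le : ∀ x ∈ Ici (0:ℝ), 1 ≤ w x
  at_zero : w 0 = 1

/-- `g ∈ H_w` with derivative `g'`: `g` is absolutely continuous on `[0,∞)` with
a.e. derivative `g'`, and `∫₀^∞ w (g')² < ∞`. -/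
def MemHw (w g g' : ℝ → ℝ) : Prop :=
  (∀ x ∈ Ici (0:ℝ), g x = g 0 + ∫ t in Ioc (0:ℝ) x, g' t) ∧
  (∀ x ∈ Ici (0:ℝ), IntegrableOn g' (Ioc 0 x)) ∧
  IntegrableOn (fun x => w x * g' x ^ 2) (Ioi 0)

/-- The reproducing kernel `h_x(y) = 1 + ∫₀^{min(x,y)} 1/w(s) ds`. -/
def hker (w : ℝ → ℝ) (x y : ℝ) : ℝ := 1 + ∫ s in Ioc (0:ℝ) (min x y), 1 / w s

/-- Derivative of `h_x`. -/
def hker' (w : ℝ → ℝ) (x : ℝ) : ℝ → ℝ := (Iic x).indicator (fun s => 1 / w s)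

/-
The fundamental theorem of calculus and the weighted Cauchy–Schwarz inequality
`(∫ f')² ≤ (∫ 1/w) (∫ w f'²)` bound point values by the norm: `f(x)² ≤ (1 + k²) ‖f‖²`.
Inserting this into `(f' g + f g')² ≤ 2 f'² g² + 2 f² g'²` and integrating against `w` gives
`‖fg‖² ≤ 4 (1 + k²) ‖f‖² ‖g‖²`, slightly better than the constant `5 + 4 k²`.
-/

section AbsolutelyContinuous

variable {a b : ℝ}

lemma absolutelyContinuousOnInterval_congr {X : Type*} [PseudoMetricSpace X] {f g : ℝ → X}
    (hf : AbsolutelyContinuousOnInterval f a b) (hfg : EqOn f g (uIcc a b)) :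
    AbsolutelyContinuousOnInterval g a b := by
  refine Tendsto.congr' ?_ hf
  filter_upwards [mem_inf_of_right (mem_principal_self _)] with E hE
  refine Finset.sum_congr rfl fun i hi => ?_
  rw [hfg (hE.1 i hi).1, hfg (hE.1 i hi).2]

/-- `f` is absolutely continuous on the interval between `a` and `b` (in either order), with a.e.
derivative `f'`. This is the differential form of the integral identity in `MemHw`; the product
rule is immediate for it. -/
structure HasAEDerivOnInterval (f f' : ℝ → ℝ) (a b : ℝ) : Prop where
  absolutelyContinuous : AbsolutelyContinuousOnInterval f a b
  ae_hasDerivAt : ∀ᵐ t, t ∈ uIcc a b → HasDerivAt f (f' t) t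

variable {f f' g g' : ℝ → ℝ}

namespace HasAEDerivOnInterval

lemma of_eq_integral (hf' : IntervalIntegrable f' volume a b)
    (hf : ∀ x ∈ uIcc a b, f x = f a + ∫ t in a..x, f' t) : HasAEDerivOnInterval f f' a b where
  absolutelyContinuous := by
    have hconst : AbsolutelyContinuousOnInterval (fun _ => f a) a b :=
      (LipschitzWith.const (f a)).lipschitzOnWith.absolutelyContinuousOnInterval
    exact absolutelyContinuousOnInterval_congr
      (hconst.add (hf'.absolutelyContinuousOnInterval_intervalIntegral left_mem_uIcc))
      fun x hx => (hf x hx).symm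
  ae_hasDerivAt := by
    have hne (c : ℝ) : ∀ᵐ t : ℝ, t ≠ c := by simp [ae_iff, measure_singleton]
    filter_upwards [hf'.ae_hasDerivAt_integral, hne (min a b), hne (max a b)]
      with t ht hmin hmax htab
    have hnhds : uIcc a b ∈ nhds t :=
      Icc_mem_nhds (htab.1.lt_of_ne' hmin) (htab.2.lt_of_ne hmax)
    refine ((ht htab a left_mem_uIcc).const_add (f a)).congr_of_eventuallyEq ?_
    filter_upwards [hnhds] using hf

lemma ae_deriv_eq (hf : HasAEDerivOnInterval f f' a b) :
    deriv f =ᵐ[volume.restrict (uIoc a b)] f' := by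
  rw [EventuallyEq, ae_restrict_iff' measurableSet_uIoc]
  filter_upwards [hf.ae_hasDerivAt] with t ht htab using (ht (uIoc_subset_uIcc htab)).deriv

lemma intervalIntegrable (hf : HasAEDerivOnInterval f f' a b) :
    IntervalIntegrable f' volume a b :=
  hf.absolutelyContinuous.intervalIntegrable_deriv.congr_ae hf.ae_deriv_eq

lemma eq_add_integral (hf : HasAEDerivOnInterval f f' a b) : f b = f a + ∫ t in a..b, f' t := by
  rw [← intervalIntegral.integral_congr_ae_restrict hf.ae_deriv_eq,
    hf.absolutelyContinuous.integral_deriv_eq_sub, add_sub_cancel]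

lemma mul (hf : HasAEDerivOnInterval f f' a b) (hg : HasAEDerivOnInterval g g' a b) :
    HasAEDerivOnInterval (fun x => f x * g x) (fun x => f' x * g x + f x * g' x) a b where
  absolutelyContinuous := hf.absolutelyContinuous.mul hg.absolutelyContinuous
  ae_hasDerivAt := by
    filter_upwards [hf.ae_hasDerivAt, hg.ae_hasDerivAt] with t hft hgt ht
    exact (hft ht).mul (hgt ht)

end HasAEDerivOnInterval

end AbsolutelyContinuous

section WeightedIntegrals

variable {α : Type*} [MeasurableSpace α] {μ : Measure α} {w : α → ℝ}

lemma aestronglyMeasurable_restrict_Ioi {E : Type*} [TopologicalSpace E]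
    [TopologicalSpace.PseudoMetrizableSpace E] {ν : Measure ℝ} {f : ℝ → E} {a : ℝ}
    (hf : ∀ b ≥ a, AEStronglyMeasurable f (ν.restrict (Ioc a b))) :
    AEStronglyMeasurable f (ν.restrict (Ioi a)) := by
  have hcover : ⋃ n : ℕ, Ioc a (max a n) = Ioi a :=
    iUnion_Ioc_eq_Ioi_self_iff.2 fun x _ =>
      (exists_nat_ge x).imp fun n hn => hn.trans (le_max_right a n)
  rw [← hcover, aestronglyMeasurable_iUnion_iff]
  exact fun n => hf _ (le_max_left a n)

lemma integral_one_div_nonneg (hw : ∀ᵐ x ∂μ, 0 ≤ w x) : 0 ≤ ∫ x, 1 / w x ∂μ :=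
  integral_nonneg_of_ae (hw.mono fun x hx => by positivity)

lemma integral_weight_mul_sq_nonneg {g : α → ℝ} (hw : ∀ᵐ x ∂μ, 0 ≤ w x) :
    0 ≤ ∫ x, w x * g x ^ 2 ∂μ :=
  integral_nonneg_of_ae (hw.mono fun x hx => by positivity)

lemma sq_integral_le_integral_one_div_mul_integral {g : α → ℝ} (hw : ∀ᵐ x ∂μ, 0 < w x)
    (hk : Integrable (fun x => 1 / w x) μ) (hg : Integrable g μ)
    (hwg : Integrable (fun x => w x * g x ^ 2) μ) :
    (∫ x, g x ∂μ) ^ 2 ≤ (∫ x, 1 / w x ∂μ) * ∫ x, w x * g x ^ 2 ∂μ := by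
  have hquad (t : ℝ) : 0 ≤ (∫ x, 1 / w x ∂μ) * (t * t) + (2 * ∫ x, g x ∂μ) * t +
      ∫ x, w x * g x ^ 2 ∂μ :=
    calc
      0 ≤ ∫ x, (t + w x * g x) ^ 2 / w x ∂μ :=
        integral_nonneg_of_ae (hw.mono fun x hx => by positivity)
      _ = ∫ x, (1 / w x * (t * t) + g x * (2 * t) + w x * g x ^ 2) ∂μ :=
        integral_congr_ae (hw.mono fun x hx => by field_simp; ring)
      _ = _ := by
        have hlin : Integrable (fun x => 1 / w x * (t * t) + g x * (2 * t)) μ :=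
          (hk.mul_const _).add (hg.mul_const _)
        rw [integral_add hlin hwg, integral_add (hk.mul_const _) (hg.mul_const _),
          integral_mul_const, integral_mul_const]
        ring
  have hdiscrim := discrim_le_zero hquad
  rw [discrim] at hdiscrim
  linarith

lemma add_sq_le_one_add_mul_of_sq_le_mul {a b K F : ℝ} (hK : 0 ≤ K) (hF : 0 ≤ F)
    (hb : b ^ 2 ≤ K * F) :
    (a + b) ^ 2 ≤ (1 + K) * (a ^ 2 + F) := by
  have hcross : 2 * a * b ≤ K * a ^ 2 + F := by
    refine le_of_abs_le (abs_le_of_sq_le_sq ?_ (by positivity))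
    calc
      (2 * a * b) ^ 2 = 4 * a ^ 2 * b ^ 2 := by ring
      _ ≤ 4 * a ^ 2 * (K * F) := by gcongr
      _ = 4 * (K * a ^ 2) * F := by ring
      _ ≤ (K * a ^ 2 + F) ^ 2 := four_mul_le_sq_add _ _
  linarith

variable {f f' g g' : α → ℝ} {A B : ℝ}

lemma weight_mul_sq_le {w f f' g g' : ℝ} (hw : 0 ≤ w) (hf : f ^ 2 ≤ A) (hg : g ^ 2 ≤ B) :
    w * (f' * g + f * g') ^ 2 ≤ 2 * B * (w * f' ^ 2) + 2 * A * (w * g' ^ 2) :=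
  calc
    w * (f' * g + f * g') ^ 2 ≤ w * (2 * ((f' * g) ^ 2 + (f * g') ^ 2)) := by
      gcongr
      exact add_sq_le
    _ = 2 * g ^ 2 * (w * f' ^ 2) + 2 * f ^ 2 * (w * g' ^ 2) := by ring
    _ ≤ 2 * B * (w * f' ^ 2) + 2 * A * (w * g' ^ 2) := by gcongr

lemma integrable_weight_mul_sq (hw : ∀ᵐ x ∂μ, 0 ≤ w x) (hf : ∀ᵐ x ∂μ, f x ^ 2 ≤ A)
    (hg : ∀ᵐ x ∂μ, g x ^ 2 ≤ B) (hf' : Integrable (fun x => w x * f' x ^ 2) μ)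
    (hg' : Integrable (fun x => w x * g' x ^ 2) μ)
    (hmeas : AEStronglyMeasurable (fun x => w x * (f' x * g x + f x * g' x) ^ 2) μ) :
    Integrable (fun x => w x * (f' x * g x + f x * g' x) ^ 2) μ := by
  refine ((hf'.const_mul (2 * B)).add (hg'.const_mul (2 * A))).mono' hmeas ?_
  filter_upwards [hw, hf, hg] with x hwx hfx hgx
  rw [Real.norm_of_nonneg (by positivity)]
  exact weight_mul_sq_le hwx hfx hgx

lemma integral_weight_mul_sq_le (hw : ∀ᵐ x ∂μ, 0 ≤ w x) (hf : ∀ᵐ x ∂μ, f x ^ 2 ≤ A)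
    (hg : ∀ᵐ x ∂μ, g x ^ 2 ≤ B) (hf' : Integrable (fun x => w x * f' x ^ 2) μ)
    (hg' : Integrable (fun x => w x * g' x ^ 2) μ) :
    ∫ x, w x * (f' x * g x + f x * g' x) ^ 2 ∂μ ≤
      2 * B * (∫ x, w x * f' x ^ 2 ∂μ) + 2 * A * ∫ x, w x * g' x ^ 2 ∂μ := by
  have hf'B := hf'.const_mul (2 * B)
  have hg'A := hg'.const_mul (2 * A)
  rw [← integral_const_mul, ← integral_const_mul, ← integral_add hf'B hg'A]
  refine integral_mono_of_nonneg ?_ (hf'B.add hg'A) ?_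
  · filter_upwards [hw] with x hwx using by positivity
  · filter_upwards [hw, hf, hg] with x hwx hfx hgx using weight_mul_sq_le hwx hfx hgx

end WeightedIntegrals

section FilipovicSpace

variable {w f f' g g' : ℝ → ℝ}

lemma IsWeight.ae_pos (hw : IsWeight w) : ∀ᵐ x ∂volume.restrict (Ioi 0), 0 < w x := by
  filter_upwards [ae_restrict_mem measurableSet_Ioi] with x hx
  exact one_pos.trans_le (hw.one_le x (Ioi_subset_Ici_self hx))

lemma wNorm_nonneg : 0 ≤ wNorm w f f' := Real.sqrt_nonneg _

lemma wNorm_sq (hw : ∀ᵐ x ∂volume.restrict (Ioi 0), 0 ≤ w x) :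
    wNorm w f f' ^ 2 = f 0 ^ 2 + ∫ x in Ioi (0 : ℝ), w x * f' x ^ 2 := by
  have hinner : wInner w f f' f f' = f 0 ^ 2 + ∫ x in Ioi (0 : ℝ), w x * f' x ^ 2 := by
    simp only [wInner, pow_two, mul_assoc]
  rw [wNorm, hinner, Real.sq_sqrt]
  exact add_nonneg (sq_nonneg _) (integral_weight_mul_sq_nonneg hw)

lemma memHw_iff : MemHw w f f' ↔ (∀ b ≥ 0, HasAEDerivOnInterval f f' 0 b) ∧
    IntegrableOn (fun x => w x * f' x ^ 2) (Ioi 0) := by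
  constructor
  · rintro ⟨hf, hf', hwf'⟩
    refine ⟨fun b hb => .of_eq_integral ?_ fun x hx => ?_, hwf'⟩
    · exact (intervalIntegrable_iff_integrableOn_Ioc_of_le hb).2 (hf' b hb)
    · rw [uIcc_of_le hb] at hx
      rw [intervalIntegral.integral_of_le hx.1]
      exact hf x hx.1
  · rintro ⟨hf, hwf'⟩
    refine ⟨fun x hx => ?_, fun x hx => ?_, hwf'⟩
    · rw [← intervalIntegral.integral_of_le hx]
      exact (hf x hx).eq_add_integral
    · exact (intervalIntegrable_iff_integrableOn_Ioc_of_le hx).1 (hf x hx).intervalIntegrable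

lemma MemHw.sq_le (hf : MemHw w f f') (hw : ∀ᵐ x ∂volume.restrict (Ioi 0), 0 < w x)
    (hk : IntegrableOn (fun x => 1 / w x) (Ioi 0)) {x : ℝ} (hx : 0 ≤ x) :
    f x ^ 2 ≤ (1 + ∫ s in Ioi (0 : ℝ), 1 / w s) * wNorm w f f' ^ 2 := by
  obtain ⟨hfx, hf', hwf'⟩ := hf
  have hsub : Ioc 0 x ⊆ Ioi 0 := Ioc_subset_Ioi_self
  have hw_nonneg : ∀ᵐ s ∂volume.restrict (Ioi 0), 0 ≤ w s := hw.mono fun _ => le_of_lt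
  have hw_sub : ∀ᵐ s ∂volume.restrict (Ioc 0 x), 0 < w s :=
    ae_restrict_of_ae_restrict_of_subset hsub hw
  have hk_nonneg := integral_one_div_nonneg hw_nonneg
  have hcs : (∫ s in Ioc 0 x, f' s) ^ 2 ≤
      (∫ s in Ioi (0 : ℝ), 1 / w s) * ∫ s in Ioi (0 : ℝ), w s * f' s ^ 2 :=
    calc
      (∫ s in Ioc 0 x, f' s) ^ 2 ≤
          (∫ s in Ioc 0 x, 1 / w s) * ∫ s in Ioc 0 x, w s * f' s ^ 2 :=
        sq_integral_le_integral_one_div_mul_integral hw_sub (hk.mono_set hsub) (hf' x hx)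
          (hwf'.mono_set hsub)
      _ ≤ _ := by
        gcongr
        · exact integral_weight_mul_sq_nonneg (hw_sub.mono fun _ => le_of_lt)
        · exact hw_nonneg.mono fun s hs => by positivity
        · exact hw_nonneg.mono fun s hs => by positivity
  rw [hfx x hx, wNorm_sq hw_nonneg]
  exact add_sq_le_one_add_mul_of_sq_le_mul hk_nonneg (integral_weight_mul_sq_nonneg hw_nonneg) hcs

lemma MemHw.ae_sq_le (hf : MemHw w f f') (hw : ∀ᵐ x ∂volume.restrict (Ioi 0), 0 < w x)
    (hk : IntegrableOn (fun x => 1 / w x) (Ioi 0)) : ∀ᵐ x ∂volume.restrict (Ioi 0),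
      f x ^ 2 ≤ (1 + ∫ s in Ioi (0 : ℝ), 1 / w s) * wNorm w f f' ^ 2 := by
  filter_upwards [ae_restrict_mem measurableSet_Ioi] with x hx using hf.sq_le hw hk (le_of_lt hx)

lemma MemHw.mul (hf : MemHw w f f') (hg : MemHw w g g')
    (hw : ∀ᵐ x ∂volume.restrict (Ioi 0), 0 < w x)
    (hk : IntegrableOn (fun x => 1 / w x) (Ioi 0)) :
    MemHw w (fun x => f x * g x) (fun x => f' x * g x + f x * g' x) := by
  have hderiv : ∀ b ≥ 0, HasAEDerivOnInterval (fun x => f x * g x)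
      (fun x => f' x * g x + f x * g' x) 0 b :=
    fun b hb => ((memHw_iff.1 hf).1 b hb).mul ((memHw_iff.1 hg).1 b hb)
  have hw_meas : AEStronglyMeasurable w (volume.restrict (Ioi 0)) := by
    simpa only [Pi.inv_def, one_div, inv_inv] using hk.aemeasurable.inv.aestronglyMeasurable
  have hderiv_meas : AEStronglyMeasurable (fun x => f' x * g x + f x * g' x)
      (volume.restrict (Ioi 0)) :=
    aestronglyMeasurable_restrict_Ioi fun b hb =>
      (hderiv b hb).intervalIntegrable.aestronglyMeasurable
  exact memHw_iff.2 ⟨hderiv, integrable_weight_mul_sq (hw.mono fun _ => le_of_lt)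
    (hf.ae_sq_le hw hk) (hg.ae_sq_le hw hk) hf.2.2 hg.2.2 (hw_meas.mul (hderiv_meas.pow 2))⟩

lemma wNorm_mul_sq_le (hf : MemHw w f f') (hg : MemHw w g g')
    (hw : ∀ᵐ x ∂volume.restrict (Ioi 0), 0 < w x)
    (hk : IntegrableOn (fun x => 1 / w x) (Ioi 0)) :
    wNorm w (fun x => f x * g x) (fun x => f' x * g x + f x * g' x) ^ 2 ≤
      4 * (1 + ∫ s in Ioi (0 : ℝ), 1 / w s) * wNorm w f f' ^ 2 * wNorm w g g' ^ 2 := by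
  have hw_nonneg : ∀ᵐ x ∂volume.restrict (Ioi 0), 0 ≤ w x := hw.mono fun _ => le_of_lt
  have hint := integral_weight_mul_sq_le hw_nonneg (hf.ae_sq_le hw hk) (hg.ae_sq_le hw hk)
    hf.2.2 hg.2.2
  have hK := integral_one_div_nonneg hw_nonneg
  have hF := integral_weight_mul_sq_nonneg (g := f') hw_nonneg
  have hG := integral_weight_mul_sq_nonneg (g := g') hw_nonneg
  simp only [wNorm_sq hw_nonneg] at hint ⊢
  set K := ∫ s in Ioi (0 : ℝ), 1 / w s
  set F := ∫ s in Ioi (0 : ℝ), w s * f' s ^ 2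
  set G := ∫ s in Ioi (0 : ℝ), w s * g' s ^ 2
  have hgap : 0 ≤ (3 + 4 * K) * (f 0 ^ 2 * g 0 ^ 2) +
      2 * (1 + K) * (f 0 ^ 2 * G + g 0 ^ 2 * F) := by positivity
  linarith

lemma wNorm_mul_le {C : ℝ} (hf : MemHw w f f') (hg : MemHw w g g')
    (hw : ∀ᵐ x ∂volume.restrict (Ioi 0), 0 < w x)
    (hk : IntegrableOn (fun x => 1 / w x) (Ioi 0))
    (hC : 4 * (1 + ∫ s in Ioi (0 : ℝ), 1 / w s) ≤ C) :
    wNorm w (fun x => f x * g x) (fun x => f' x * g x + f x * g' x) ≤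
      √C * wNorm w f f' * wNorm w g g' := by
  have hC_nonneg : 0 ≤ C := by
    linarith [integral_one_div_nonneg (hw.mono fun _ => le_of_lt)]
  refine le_of_sq_le_sq ?_ (mul_nonneg (mul_nonneg C.sqrt_nonneg wNorm_nonneg) wNorm_nonneg)
  calc
    _ ≤ 4 * (1 + ∫ s in Ioi (0 : ℝ), 1 / w s) * wNorm w f f' ^ 2 * wNorm w g g' ^ 2 :=
      wNorm_mul_sq_le hf hg hw hk
    _ ≤ C * wNorm w f f' ^ 2 * wNorm w g g' ^ 2 := by gcongr
    _ = (√C * wNorm w f f' * wNorm w g g') ^ 2 := by rw [mul_pow, mul_pow, Real.sq_sqrt hC_nonneg]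

theorem stmt6_general {C : ℝ} (hw : ∀ᵐ x ∂volume.restrict (Ioi 0), 0 < w x)
    (hk : IntegrableOn (fun x => 1 / w x) (Ioi 0))
    (hC : 4 * (1 + ∫ s in Ioi (0 : ℝ), 1 / w s) ≤ C) (hf : MemHw w f f') (hg : MemHw w g g') :
    MemHw w (fun x => f x * g x) (fun x => f' x * g x + f x * g' x) ∧
      wNorm w (fun x => f x * g x) (fun x => f' x * g x + f x * g' x) ≤
        √C * wNorm w f f' * wNorm w g g' ∧
      √C * wNorm w (fun x => f x * g x) (fun x => f' x * g x + f x * g' x) ≤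
        (√C * wNorm w f f') * (√C * wNorm w g g') := by
  have hnorm := wNorm_mul_le hf hg hw hk hC
  refine ⟨hf.mul hg hw hk, hnorm, ?_⟩
  calc
    _ ≤ √C * (√C * wNorm w f f' * wNorm w g g') := by gcongr
    _ = (√C * wNorm w f f') * (√C * wNorm w g g') := by ring

end FilipovicSpace

/-- if `k² = ∫₀^∞ 1/w < ∞` then `H_w` is stable under pointwise
multiplication with `‖fg‖_w ≤ √(5+4k²) ‖f‖_w ‖g‖_w`; consequently the scaled
norm `√(5+4k²)‖·‖_w` is submultiplicative (Banach algebra property). -/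
theorem stmt6 (w : ℝ → ℝ) (hw : IsWeight w)
    (hk : IntegrableOn (fun x => 1 / w x) (Ioi 0)) :
    ∀ f f' g g' : ℝ → ℝ, MemHw w f f' → MemHw w g g' →
      MemHw w (fun x => f x * g x) (fun x => f' x * g x + f x * g' x) ∧
      wNorm w (fun x => f x * g x) (fun x => f' x * g x + f x * g' x) ≤
        Real.sqrt (5 + 4 * ∫ s in Ioi (0:ℝ), 1 / w s) * wNorm w f f' * wNorm w g g' ∧
      Real.sqrt (5 + 4 * ∫ s in Ioi (0:ℝ), 1 / w s) *
          wNorm w (fun x => f x * g x) (fun x => f' x * g x + f x * g' x) ≤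
        (Real.sqrt (5 + 4 * ∫ s in Ioi (0:ℝ), 1 / w s) * wNorm w f f') *
          (Real.sqrt (5 + 4 * ∫ s in Ioi (0:ℝ), 1 / w s) * wNorm w g g') :=
  fun _ _ _ _ hf hg => stmt6_general hw.ae_pos hk (by linarith) hf hg
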